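/- Equivalence of the sewing relation and the Schottky relation: let w₊, w₋, ρ ∈ ℂ with w₊ ≠ w₋ and ρ ≠ 0, and let q ∈ ℂ with q ∉ {1, −1} satisfy q·(w₊ − w₋)² = −ρ·(1 + q)². Set W₊ = (w₊ + q·w₋)/(1 + q) and W₋ = (w₋ + q·w₊)/(1 + q). Then for all z, z′ ∈ ℂ: (z′ − w₋)(z − w₊) = ρ if and only if (z′ − W₋)(z − W₊) = q·(z′ − W₊)(z − W₋). -/

import Mathlib

/-- Equivalence of the sewing relation and the Schottky relation: if
`q (w₊ - w₋)² = -ρ (1 + q)²` with `w₊ ≠ w₋`, `ρ ≠ 0`, `q ∉ {1, -1}`, and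
`W₊ = (w₊ + q w₋)/(1 + q)`, `W₋ = (w₋ + q w₊)/(1 + q)`, then for all `z, z′ ∈ ℂ`
the sewing relation `(z′ - w₋)(z - w₊) = ρ` holds if and only if the Schottky relation
`(z′ - W₋)(z - W₊) = q (z′ - W₊)(z - W₋)` holds. -/
theorem sewing_iff_schottky (wp wm ρ q : ℂ) (hw : wp ≠ wm) (hρ : ρ ≠ 0)
    (hq1 : q ≠ 1) (hq2 : q ≠ -1)
    (h : q * (wp - wm) ^ 2 = -ρ * (1 + q) ^ 2) (z z' : ℂ) :
    (z' - wm) * (z - wp) = ρ ↔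
      (z' - (wm + q * wp) / (1 + q)) * (z - (wp + q * wm) / (1 + q)) =
        q * ((z' - (wp + q * wm) / (1 + q)) * (z - (wm + q * wp) / (1 + q))) := by
  have h1 : (1 + q) ≠ 0 := fun h0 => hq2 (by linear_combination h0)
  have h2 : (1 - q) ≠ 0 := fun h0 => hq1 (by linear_combination -h0)
  obtain ⟨A, hA⟩ : ∃ A, A = (wp + q * wm) / (1 + q) := ⟨_, rfl⟩
  obtain ⟨B, hB⟩ : ∃ B, B = (wm + q * wp) / (1 + q) := ⟨_, rfl⟩
  rw [← hA, ← hB]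
  have e1 : A - q * B = (1 - q) * wp := by
    rw [hA, hB]; field_simp; ring
  have e2 : B - q * A = (1 - q) * wm := by
    rw [hA, hB]; field_simp; ring
  have e3 : A * B = wp * wm - ρ := by
    rw [hA, hB]; field_simp; linear_combination h
  have key : (z' - B) * (z - A) - q * ((z' - A) * (z - B))
      = (1 - q) * ((z' - wm) * (z - wp) - ρ) := by
    linear_combination (-z') * e1 - z * e2 + (1 - q) * e3
  rw [← sub_eq_zero, ← sub_eq_zero (a := (z' - B) * (z - A)), key]
  simp [h2]
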